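/- Let n ≥ 2, let f : S^{n−1} → (0,∞) be smooth, and let φ : (0,∞) → (0,∞) be smooth. Suppose h₁ and h₂ are smooth positive functions on S^{n−1} with (∇²h₁ + h₁I) and (∇²h₂ + h₂I) positive definite, each satisfying φ(1/h) h (|∇h|² + h²)^{−n/2} det(∇²h + hI) = f on S^{n−1}. If x₀ ∈ S^{n−1} is a point at which the ratio h₁/h₂ attains its maximum over S^{n−1}, then φ(1/h₂(x₀)) ≤ φ(1/h₁(x₀)). -/

import Mathlib

/-!
Put `c = h₁ x₀ / h₂ x₀`. By homogeneity, `g = c h₂ - h₁` is nonnegative on `ℝⁿ ∖ {0}` and vanishes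
at `x₀`, so `x₀` is a local minimum of `g` in the ambient space (`isLocalMin_of_ratio_max`). Hence
`∇h₁ = c ∇h₂` and `Hess h₁ ≤ c Hess h₂` at `x₀`. The first relation scales the radial term,
`radTerm h₁ = c radTerm h₂`.

With `x = x₀`, the second relation gives `Hess h₁ + c x ⊗ x ≤ c (Hess h₂ + x ⊗ x)`, where the left
side is positive definite. The determinant is monotone on such pairs (`det_le_det_of_isSymmetric`).
Since the Hessian of a 1-homogeneous function kills `x`, the left determinant is `c sphDet h₁`
(`IsSupportFn.det_hessPlus`), so `0 < c sphDet h₁ ≤ cⁿ sphDet h₂`. Substituting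
`h₁ = c h₂` and the scaling of `radTerm` into the two equations at `x₀` leaves
`φ(1/h₁) · c sphDet h₁ = φ(1/h₂) · cⁿ sphDet h₂`, whence the claim.
-/

noncomputable section

open Metric MeasureTheory Set Filter Topology
open scoped RealInnerProductSpace NNReal

/-- Abbreviation for `n`-dimensional Euclidean space. -/
abbrev Euc (n : ℕ) : Type := EuclideanSpace ℝ (Fin n)

/-- The unit sphere `S^{n-1}` in `ℝⁿ`, as a set. -/
abbrev USphere (n : ℕ) : Set (Euc n) := Metric.sphere (0 : Euc n) 1

/-- The surface (spherical Lebesgue) measure on the unit sphere. -/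
def sphMeasure (n : ℕ) : Measure (USphere n) :=
  (volume : Measure (Euc n)).toSphere

/-- Total surface measure `|S^{n-1}|` of the unit sphere. -/
def sphArea (n : ℕ) : ℝ := (sphMeasure n Set.univ).toReal

/-- Integral over the unit sphere with respect to the spherical Lebesgue measure. -/
def sphInt (n : ℕ) (g : Euc n → ℝ) : ℝ :=
  ∫ x : USphere n, g x ∂(sphMeasure n)

/-- The covariant (spherical) gradient on `S^{n-1}` of the restriction of `F`,
i.e. the tangential component of the Euclidean gradient of `F`. -/
def sphGrad (n : ℕ) (F : Euc n → ℝ) (x : Euc n) : Euc n :=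
  gradient F x - ⟪gradient F x, x⟫ • x

/-- `√(|∇h|² + h²)` for the (1-homogeneous extension of the) function `F` at `x`. -/
def radTerm (n : ℕ) (F : Euc n → ℝ) (x : Euc n) : ℝ :=
  Real.sqrt (‖sphGrad n F x‖ ^ 2 + F x ^ 2)

/-- The Euclidean Hessian operator of `F` at `x`. For a positively 1-homogeneous `F`
this operator kills `x` and restricts on `x^⊥` to the matrix `∇²h + hI` of the
spherical Hessian. -/
def hessOp (n : ℕ) (F : Euc n → ℝ) (x : Euc n) : Euc n →L[ℝ] Euc n :=
  fderiv ℝ (gradient F) x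

/-- `det(∇²h + hI)` at `x ∈ S^{n-1}`: the determinant of the restriction of the Euclidean
Hessian of the 1-homogeneous extension to `x^⊥`, computed as the determinant of
`Hess F + x ⊗ x` on all of `ℝⁿ` (the Hessian of a 1-homogeneous function kills `x`). -/
def sphDet (n : ℕ) (F : Euc n → ℝ) (x : Euc n) : ℝ :=
  LinearMap.det
    ((hessOp n F x + (innerSL ℝ x).smulRight x : Euc n →L[ℝ] Euc n) : Euc n →ₗ[ℝ] Euc n)

/-- `F` is the (1-homogeneously extended) support function of a smooth strictly convex
body with the origin in its interior: it is smooth away from the origin, positively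
1-homogeneous, positive, and `∇²h + hI` is positive definite on each tangent space. -/
structure IsSupportFn (n : ℕ) (F : Euc n → ℝ) : Prop where
  smooth : ContDiffOn ℝ (⊤ : ℕ∞) F {(0 : Euc n)}ᶜ
  homog : ∀ c : ℝ, 0 < c → ∀ x : Euc n, F (c • x) = c * F x
  pos : ∀ x ∈ USphere n, 0 < F x
  posdef : ∀ x ∈ USphere n, ∀ v : Euc n, v ≠ 0 → ⟪x, v⟫ = 0 →
    0 < ⟪v, hessOp n F x v⟫

/-- The convex body determined by the support function `F`. -/
def bodyOf (n : ℕ) (F : Euc n → ℝ) : Set (Euc n) :=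
  {y | ∀ x ∈ USphere n, ⟪x, y⟫ ≤ F x}

/-- The radial function of the convex body with support function `F`. -/
def radialFn (n : ℕ) (F : Euc n → ℝ) (u : Euc n) : ℝ :=
  sSup {r : ℝ | 0 < r ∧ r • u ∈ bodyOf n F}

/-- The normalization factor `η` of the flow. -/
def flowEta (n : ℕ) (f : Euc n → ℝ) (φ : ℝ → ℝ) (h : Euc n → ℝ) : ℝ :=
  sphArea n / sphInt n (fun x => f x / φ (1 / h x))

/-- `H : ℝ → Euc n → ℝ` is (the family of support functions of) a smooth, origin-symmetric,
strictly convex solution of the flow on the time interval `J`. -/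
structure IsFlowSol (n : ℕ) (f : Euc n → ℝ) (φ : ℝ → ℝ) (J : Set ℝ)
    (H : ℝ → Euc n → ℝ) : Prop where
  smooth : ContDiffOn ℝ (⊤ : ℕ∞) (fun p : ℝ × Euc n => H p.1 p.2) (J ×ˢ {(0 : Euc n)}ᶜ)
  body : ∀ t ∈ J, IsSupportFn n (H t)
  symm : ∀ t ∈ J, ∀ x : Euc n, H t (-x) = H t x
  eqn : ∀ t ∈ J, ∀ x ∈ USphere n,
    HasDerivWithinAt (fun s => H s x)
      (H t x - flowEta n f φ (H t) * f x * radTerm n (H t) x ^ n /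
        (φ (1 / H t x) * sphDet n (H t) x)) J t

/-- Condition (i) of the Orlicz-Aleksandrov flow theorem. -/
def CondI (n : ℕ) (f : Euc n → ℝ) (φ : ℝ → ℝ) (h₀ : Euc n → ℝ) : Prop :=
  ∃ R : ℝ → ℝ, (∀ s ∈ Ioi (0 : ℝ), 0 < R s) ∧ StrictMonoOn R (Ioi 0) ∧
    Tendsto R (𝓝[>] (0 : ℝ)) (𝓝 0) ∧ Tendsto R atTop atTop ∧
    (∀ s ∈ Ioi (0 : ℝ), IntegrableOn (fun t => 1 / (t * φ t)) (Ioo 0 s) ∧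
      R s = ∫ t in Ioo (0 : ℝ) s, 1 / (t * φ t)) ∧
    (∀ s ∈ Ioi (0 : ℝ), HasDerivAt R (1 / (s * φ s)) s ∧ 1 / (s * φ s) ≠ 0) ∧
    ∃ Chat : ℝ, 0 < Chat ∧
      (∀ θ ∈ USphere n,
        sphInt n (fun x => f x * R (1 / |⟪x, θ⟫|)) ≤ Chat) ∧
      Chat < sphInt n (fun x => f x * R (1 / h₀ x))

/-- Condition (ii) of the Orlicz-Aleksandrov flow theorem. -/
def CondII (φ : ℝ → ℝ) : Prop :=
  ∃ R : ℝ → ℝ, (∀ s ∈ Ioi (0 : ℝ), 0 < R s) ∧ StrictAntiOn R (Ioi 0) ∧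
    Tendsto R (𝓝[>] (0 : ℝ)) atTop ∧ Tendsto R atTop (𝓝 0) ∧
    (∀ s ∈ Ioi (0 : ℝ), IntegrableOn (fun t => 1 / (t * φ t)) (Ioi s) ∧
      R s = ∫ t in Ioi s, 1 / (t * φ t)) ∧
    (∀ s ∈ Ioi (0 : ℝ), HasDerivAt R (-(1 / (s * φ s))) s ∧ 1 / (s * φ s) ≠ 0)

/-! ### Monotonicity of the determinant on symmetric operators -/

section
variable {E : Type*} [NormedAddCommGroup E] [InnerProductSpace ℝ E] [FiniteDimensional ℝ E]

theorem one_le_det_of_isSymmetric {T : E →ₗ[ℝ] E} (hT : T.IsSymmetric)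
    (h : ∀ v, ‖v‖ ^ 2 ≤ ⟪T v, v⟫) : 1 ≤ LinearMap.det T := by
  rw [hT.det_eq_prod_eigenvalues rfl]
  refine Finset.one_le_prod fun i _ => ?_
  have := h (hT.eigenvectorBasis rfl i)
  rw [hT.apply_eigenvectorBasis, real_inner_smul_left, real_inner_self_eq_norm_sq,
    (hT.eigenvectorBasis rfl).orthonormal.1 i] at this
  simpa using this

theorem det_pos_of_isSymmetric {T : E →ₗ[ℝ] E} (hT : T.IsSymmetric)
    (h : ∀ v, v ≠ 0 → 0 < ⟪T v, v⟫) : 0 < LinearMap.det T := by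
  rw [hT.det_eq_prod_eigenvalues rfl]
  refine Finset.prod_pos fun i _ => ?_
  have := h (hT.eigenvectorBasis rfl i) ((hT.eigenvectorBasis rfl).orthonormal.ne_zero i)
  rw [hT.apply_eigenvectorBasis, real_inner_smul_left, real_inner_self_eq_norm_sq,
    (hT.eigenvectorBasis rfl).orthonormal.1 i] at this
  simpa using this

/-- A positive definite form becomes the standard inner product after a linear change of variables:
scale each vector of an orthonormal eigenbasis by the inverse square root of its eigenvalue. -/
theorem exists_adjoint_comp_comp_eq_id {A : E →ₗ[ℝ] E} (hA : A.IsSymmetric)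
    (hpos : ∀ v, v ≠ 0 → 0 < ⟪A v, v⟫) :
    ∃ S : E →ₗ[ℝ] E, LinearMap.adjoint S ∘ₗ A ∘ₗ S = LinearMap.id := by
  set b := hA.eigenvectorBasis rfl
  set μ := hA.eigenvalues rfl
  have hAb : ∀ i, A (b i) = μ i • b i := fun i => hA.apply_eigenvectorBasis rfl i
  have hμ : ∀ i, 0 < μ i := fun i => by
    have := hpos (b i) (b.orthonormal.ne_zero i)
    rw [hAb, real_inner_smul_left, real_inner_self_eq_norm_sq, b.orthonormal.1 i] at this
    simpa using this
  refine ⟨b.toBasis.constr ℝ fun i => (√(μ i))⁻¹ • b i, ?_⟩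
  have hS : ∀ i, (b.toBasis.constr ℝ fun i => (√(μ i))⁻¹ • b i) (b i) = (√(μ i))⁻¹ • b i :=
    fun i => by
      conv_lhs => rw [← b.coe_toBasis]
      rw [Module.Basis.constr_basis, b.coe_toBasis]
  refine b.toBasis.ext fun i => InnerProductSpace.ext_inner_right_basis b.toBasis fun j => ?_
  have hs : √(μ i) ≠ 0 := (Real.sqrt_pos.2 (hμ i)).ne'
  simp only [OrthonormalBasis.coe_toBasis, LinearMap.comp_apply, LinearMap.adjoint_inner_left, hS,
    map_smul, hAb, real_inner_smul_left, real_inner_smul_right, LinearMap.id_apply,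
    orthonormal_iff_ite.1 b.orthonormal]
  split_ifs with hij
  · subst hij
    field_simp
    rw [Real.sq_sqrt (hμ i).le]
  · simp

/-- Conjugating by the `S` that turns `A` into the identity reduces the claim to `B ≥ id`, where all
eigenvalues are at least `1`. -/
theorem det_le_det_of_isSymmetric {A B : E →ₗ[ℝ] E} (hA : A.IsSymmetric) (hB : B.IsSymmetric)
    (hpos : ∀ v, v ≠ 0 → 0 < ⟪A v, v⟫) (hAB : ∀ v, ⟪A v, v⟫ ≤ ⟪B v, v⟫) :
    0 < LinearMap.det A ∧ LinearMap.det A ≤ LinearMap.det B := by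
  obtain ⟨S, hS⟩ := exists_adjoint_comp_comp_eq_id hA hpos
  have hA0 := det_pos_of_isSymmetric hA hpos
  set c := LinearMap.det (LinearMap.adjoint S) * LinearMap.det S with hc
  have h1 : c * LinearMap.det A = 1 := by
    have := congrArg LinearMap.det hS
    simp only [LinearMap.det_comp, LinearMap.det_id] at this
    linarith
  have h2 : 1 ≤ c * LinearMap.det B := by
    have := one_le_det_of_isSymmetric (T := LinearMap.adjoint S ∘ₗ B ∘ₗ S)
      (fun v w => by
        simp only [LinearMap.comp_apply, LinearMap.adjoint_inner_left,
          LinearMap.adjoint_inner_right]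
        exact hB _ _)
      (fun v => by
        have hv := congrArg (fun T : E →ₗ[ℝ] E => ⟪T v, v⟫) hS
        simp only [LinearMap.comp_apply, LinearMap.adjoint_inner_left, LinearMap.id_apply,
          real_inner_self_eq_norm_sq] at hv ⊢
        exact hv ▸ hAB (S v))
    simp only [LinearMap.det_comp] at this
    linarith
  have h3 : 0 < c := pos_of_mul_pos_left (h1.symm ▸ one_pos) hA0.le
  exact ⟨hA0, le_of_mul_le_mul_left (h1.trans_le h2) h3⟩

/-! ### Second-order necessary condition at a local minimum -/

/-- If the second derivative were negative, the point would also be a local maximum, so the function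
would be locally constant and its second derivative zero. -/
theorem IsLocalMin.deriv_deriv_nonneg {g : ℝ → ℝ} {a : ℝ} (h : IsLocalMin g a)
    (hc : ContinuousAt g a) : 0 ≤ deriv (deriv g) a := by
  by_contra! hneg
  have hmax := isLocalMax_of_deriv_deriv_neg hneg h.deriv_eq_zero hc
  have hconst : g =ᶠ[𝓝 a] fun _ => g a := by
    filter_upwards [h, hmax] with x h1 h2 using le_antisymm h2 h1
  have := hconst.deriv.deriv_eq
  simp at this
  exact hneg.ne this

theorem IsLocalMin.fderiv_fderiv_nonneg {F : Type*} [NormedAddCommGroup F] [NormedSpace ℝ F]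
    {g : F → ℝ} {x : F} (h : IsLocalMin g x)
    (hg : ContDiffAt ℝ 2 g x) (v : F) : 0 ≤ fderiv ℝ (fderiv ℝ g) x v v := by
  have hline : HasDerivAt (fun t : ℝ => x + t • v) v 0 := by
    simpa using ((hasDerivAt_id (0 : ℝ)).smul_const v).const_add x
  have hlim : Tendsto (fun t : ℝ => x + t • v) (𝓝 0) (𝓝 x) := by
    simpa using hline.continuousAt.tendsto
  have hmin : IsLocalMin (fun t : ℝ => g (x + t • v)) 0 := by
    have := hlim.eventually h
    filter_upwards [this] with t ht
    simpa using ht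
  have hd1 : deriv (fun t : ℝ => g (x + t • v)) =ᶠ[𝓝 0] fun t => fderiv ℝ g (x + t • v) v := by
    filter_upwards [hlim.eventually (hg.eventually (by simp))] with t ht
    have hl : HasDerivAt (fun t : ℝ => x + t • v) v t := by
      simpa using ((hasDerivAt_id t).smul_const v).const_add x
    exact ((ht.differentiableAt two_ne_zero).hasFDerivAt.comp_hasDerivAt t hl).deriv
  have hd2 : HasDerivAt (fun t : ℝ => fderiv ℝ g (x + t • v)) (fderiv ℝ (fderiv ℝ g) x v) 0 := by
    have hdf : DifferentiableAt ℝ (fderiv ℝ g) (x + (0 : ℝ) • v) := by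
      simpa using (hg.fderiv_right (m := 1) (by norm_num)).differentiableAt one_ne_zero
    have := hdf.hasFDerivAt.comp_hasDerivAt 0 hline
    rw [zero_smul, add_zero] at this
    exact this
  have hcont : ContinuousAt g (x + (0 : ℝ) • v) := by simpa using hg.continuousAt
  have := hmin.deriv_deriv_nonneg
    (ContinuousAt.comp (f := fun t : ℝ => x + t • v) hcont hline.continuousAt)
  rwa [hd1.deriv_eq, (hd2.clm_apply (hasDerivAt_const 0 v)).deriv, map_zero, add_zero] at this
end

/-! ### Hessians of support functions -/

section
variable {n : ℕ}

theorem inner_hessOp {F : Euc n → ℝ} {x : Euc n} (hF : ContDiffAt ℝ 2 F x) (v w : Euc n) :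
    ⟪hessOp n F x v, w⟫ = fderiv ℝ (fderiv ℝ F) x v w := by
  have hd : DifferentiableAt ℝ (fderiv ℝ F) x :=
    (hF.fderiv_right (m := 1) (by norm_num)).differentiableAt one_ne_zero
  -- The inverse Riesz map, made `ℝ`-linear: Mathlib states it as a conjugate-linear isometry.
  let L : (Euc n →L[ℝ] ℝ) →L[ℝ] Euc n :=
    LinearMap.toContinuousLinearMap
      { toFun := fun T => (InnerProductSpace.toDual ℝ (Euc n)).symm T
        map_add' := fun S T => map_add _ S T
        map_smul' := fun a T => (InnerProductSpace.toDual ℝ (Euc n)).symm.map_smulₛₗ a T }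
  have hL : ∀ T w, ⟪L T, w⟫ = T w := fun T w => InnerProductSpace.toDual_symm_apply
  have hcomp : HasFDerivAt (gradient F) (L ∘L fderiv ℝ (fderiv ℝ F) x) x :=
    L.hasFDerivAt.comp x hd.hasFDerivAt
  rw [hessOp, hcomp.fderiv, ContinuousLinearMap.comp_apply, hL]

theorem hessOp_isSymmetric {F : Euc n → ℝ} {x : Euc n} (hF : ContDiffAt ℝ 2 F x) :
    (hessOp n F x : Euc n →ₗ[ℝ] Euc n).IsSymmetric := fun v w => by
  simp only [ContinuousLinearMap.coe_coe]
  rw [real_inner_comm (hessOp n F x w) v, inner_hessOp hF, inner_hessOp hF]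
  exact hF.isSymmSndFDerivAt (by simp) v w

namespace IsSupportFn
variable {F : Euc n → ℝ}

theorem contDiffAt (hF : IsSupportFn n F) {x : Euc n} (hx : x ≠ 0) : ContDiffAt ℝ 2 F x :=
  (hF.smooth.contDiffAt (isOpen_compl_singleton.mem_nhds hx)).of_le
    (WithTop.coe_le_coe.2 (le_top : (2 : ℕ∞) ≤ ⊤))

/-- The derivative of a 1-homogeneous function is 0-homogeneous. -/
theorem fderiv_smul (hF : IsSupportFn n F) {c : ℝ} (hc : 0 < c) (x : Euc n) :
    fderiv ℝ F (c • x) = fderiv ℝ F x := by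
  have h : (fun y => F (c • y)) = c • F := funext fun y => hF.homog c hc y
  have h1 := fderiv_comp_smul (𝕜 := ℝ) (f := F) (x := x) c
  rw [h, fderiv_const_smul_field] at h1
  exact (smul_right_injective _ hc.ne' h1).symm

/-- The Hessian at `x` kills `x`: the first derivative is constant along the ray through `x`. -/
theorem hessOp_self (hF : IsSupportFn n F) {x : Euc n} (hx : x ≠ 0) : hessOp n F x x = 0 := by
  have hd : DifferentiableAt ℝ (fderiv ℝ F) ((1 : ℝ) • x) := by
    rw [one_smul]
    exact ((hF.contDiffAt hx).fderiv_right (m := 1) (by norm_num)).differentiableAt one_ne_zero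
  have hline : HasDerivAt (fun t : ℝ => t • x) x 1 := by
    simpa using (hasDerivAt_id (1 : ℝ)).smul_const x
  have h1 := hd.hasFDerivAt.comp_hasDerivAt 1 hline
  have h2 : (fderiv ℝ F ∘ fun t : ℝ => t • x) =ᶠ[𝓝 1] fun _ => fderiv ℝ F x := by
    filter_upwards [lt_mem_nhds (zero_lt_one' ℝ)] with t ht using hF.fderiv_smul ht x
  have h3 : fderiv ℝ (fderiv ℝ F) x x = 0 := by
    have := h1.unique ((hasDerivAt_const (1 : ℝ) (fderiv ℝ F x)).congr_of_eventuallyEq h2)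
    rwa [one_smul] at this
  refine ext_inner_right ℝ fun w => ?_
  rw [inner_hessOp (hF.contDiffAt hx), h3, inner_zero_left]
  rfl

end IsSupportFn

/-- The operator `Hess F + c x ⊗ x` at `x`. For `c = 1` its determinant is `sphDet n F x`; the
parameter lets `c (Hess h₂ + x ⊗ x)` be compared with an operator having the same component
in the direction `x`. -/
def hessPlus (n : ℕ) (F : Euc n → ℝ) (x : Euc n) (c : ℝ) : Euc n →ₗ[ℝ] Euc n :=
  (hessOp n F x : Euc n →ₗ[ℝ] Euc n) + c • (innerₗ (Euc n) x).smulRight x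

theorem hessPlus_apply (F : Euc n → ℝ) (x : Euc n) (c : ℝ) (v : Euc n) :
    hessPlus n F x c v = hessOp n F x v + c • ⟪x, v⟫ • x := rfl

theorem inner_hessPlus (F : Euc n → ℝ) (x : Euc n) (c : ℝ) (v w : Euc n) :
    ⟪hessPlus n F x c v, w⟫ = ⟪hessOp n F x v, w⟫ + c * (⟪x, v⟫ * ⟪x, w⟫) := by
  rw [hessPlus_apply, inner_add_left, real_inner_smul_left, real_inner_smul_left]

theorem sphDet_eq (F : Euc n → ℝ) (x : Euc n) :
    sphDet n F x = LinearMap.det (hessPlus n F x 1) := by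
  rw [sphDet]
  congr 1
  ext1 v
  rw [hessPlus_apply, one_smul]
  rfl

theorem hessPlus_isSymmetric {F : Euc n → ℝ} {x : Euc n} (hF : ContDiffAt ℝ 2 F x) (c : ℝ) :
    (hessPlus n F x c).IsSymmetric := fun v w => by
  have h := hessOp_isSymmetric hF v w
  simp only [ContinuousLinearMap.coe_coe] at h
  rw [real_inner_comm (hessPlus n F x c w) v, inner_hessPlus, inner_hessPlus, h,
    real_inner_comm (hessOp n F x w) v, mul_comm ⟪x, v⟫]

/-- Since `Hess F` kills `x`, `Hess F + c x ⊗ x` is `Hess F + x ⊗ x` composed with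
`id + (c - 1) x ⊗ x`, whose determinant is `c`. -/
theorem IsSupportFn.det_hessPlus {F : Euc n → ℝ} (hF : IsSupportFn n F) {x : Euc n}
    (hx : ‖x‖ = 1) (c : ℝ) : LinearMap.det (hessPlus n F x c) = c * sphDet n F x := by
  have hx0 : x ≠ 0 := by rintro rfl; simp at hx
  have hcomp : hessPlus n F x c =
      hessPlus n F x 1 ∘ₗ LinearMap.transvection ((c - 1) • innerₗ (Euc n) x) x := by
    ext1 v
    simp only [LinearMap.comp_apply, LinearMap.transvection.apply, map_add, map_smul,
      hessPlus_apply, hF.hessOp_self hx0, LinearMap.smul_apply, innerₗ_apply_apply,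
      real_inner_self_eq_norm_sq, hx]
    module
  rw [hcomp, LinearMap.det_comp, LinearMap.transvection.det, ← sphDet_eq]
  simp [hx, mul_comm]

/-- Splitting `v = w + a x` with `w ⊥ x`, the quadratic form is `⟪w, Hess F w⟫ + c a²`. -/
theorem IsSupportFn.hessPlus_pos {F : Euc n → ℝ} (hF : IsSupportFn n F) {x : Euc n}
    (hx : ‖x‖ = 1) {c : ℝ} (hc : 0 < c) {v : Euc n} (hv : v ≠ 0) :
    0 < ⟪hessPlus n F x c v, v⟫ := by
  have hx0 : x ≠ 0 := by rintro rfl; simp at hx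
  set a := ⟪x, v⟫ with ha
  set w := v - a • x with hw
  have hHx := hF.hessOp_self hx0
  have hv' : v = w + a • x := by rw [hw]; abel
  have hxw : ⟪x, w⟫ = 0 := by
    rw [hw, inner_sub_right, real_inner_smul_right, real_inner_self_eq_norm_sq, hx, ← ha]; ring
  have hHv : ⟪hessOp n F x v, v⟫ = ⟪w, hessOp n F x w⟫ := by
    have hs := hessOp_isSymmetric (hF.contDiffAt hx0) w x
    simp only [ContinuousLinearMap.coe_coe, hHx, inner_zero_right] at hs
    rw [hv', map_add, map_smul, hHx, smul_zero, add_zero, inner_add_right,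
      real_inner_smul_right, hs, mul_zero, add_zero, real_inner_comm]
  rw [inner_hessPlus, hHv, ← ha]
  by_cases hw0 : w = 0
  · have ha0 : a ≠ 0 := by
      intro h
      rw [hw0, h] at hv'
      exact hv (by simpa using hv')
    rw [hw0, inner_zero_left, zero_add]
    exact mul_pos hc (mul_self_pos.2 ha0)
  · have := hF.posdef x (by simpa using hx) w hw0 hxw
    exact add_pos_of_pos_of_nonneg this (mul_nonneg hc.le (mul_self_nonneg a))

/-! ### The maximum point of the ratio -/

/-- The maximality on the sphere spreads to all of `ℝⁿ ∖ {0}` by homogeneity, giving a minimum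
that is unconstrained near `x₀`. -/
theorem isLocalMin_of_ratio_max {F G : Euc n → ℝ} (hF : IsSupportFn n F)
    (hG : IsSupportFn n G) {x₀ : Euc n} (hx₀ : x₀ ∈ USphere n)
    (hmax : ∀ x ∈ USphere n, F x / G x ≤ F x₀ / G x₀) :
    IsLocalMin (fun y => F x₀ / G x₀ * G y - F y) x₀ := by
  have hx0 : x₀ ≠ 0 := ne_zero_of_mem_unit_sphere (⟨x₀, hx₀⟩ : USphere n)
  filter_upwards [isOpen_compl_singleton.mem_nhds hx0] with y hy
  have hy' : 0 < ‖y‖ := norm_pos_iff.2 hy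
  have hu : ‖y‖⁻¹ • y ∈ USphere n := by
    simp [norm_smul, hy'.ne']
  have h := hmax _ hu
  rw [div_le_iff₀ (hG.pos _ hu), hF.homog _ (inv_pos.2 hy'), hG.homog _ (inv_pos.2 hy'),
    mul_left_comm] at h
  have := le_of_mul_le_mul_left h (inv_pos.2 hy')
  rw [div_mul_cancel₀ _ (hG.pos _ hx₀).ne']
  linarith

theorem radTerm_of_gradient_eq {F G : Euc n → ℝ} {x : Euc n} {c : ℝ} (hc : 0 ≤ c)
    (h0 : F x = c * G x) (h1 : gradient F x = c • gradient G x) :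
    radTerm n F x = c * radTerm n G x := by
  have hs : sphGrad n F x = c • sphGrad n G x := by
    rw [sphGrad, sphGrad, h1, real_inner_smul_left]; module
  rw [radTerm, radTerm, hs, h0, norm_smul, Real.norm_of_nonneg hc,
    show (c * ‖sphGrad n G x‖) ^ 2 + (c * G x) ^ 2 = c ^ 2 * (‖sphGrad n G x‖ ^ 2 + G x ^ 2) by
      ring, Real.sqrt_mul (sq_nonneg c), Real.sqrt_sq hc]

end

/-- at a maximum point of the ratio `h₁/h₂` of two solutions,
`φ(1/h₂(x₀)) ≤ φ(1/h₁(x₀))`. -/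
theorem ratio_max_point_inequality
    (n : ℕ) (hn : 2 ≤ n)
    (f : Euc n → ℝ) (φ : ℝ → ℝ)
    (hf_smooth : ContDiffOn ℝ (⊤ : ℕ∞) f {(0 : Euc n)}ᶜ)
    (hf_pos : ∀ x ∈ USphere n, 0 < f x)
    (hφ_smooth : ContDiffOn ℝ (⊤ : ℕ∞) φ (Ioi 0))
    (hφ_pos : ∀ s ∈ Ioi (0 : ℝ), 0 < φ s)
    (h₁ h₂ : Euc n → ℝ)
    (hh₁ : IsSupportFn n h₁) (hh₂ : IsSupportFn n h₂)
    (heq₁ : ∀ x ∈ USphere n,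
      φ (1 / h₁ x) * h₁ x * sphDet n h₁ x / radTerm n h₁ x ^ n = f x)
    (heq₂ : ∀ x ∈ USphere n,
      φ (1 / h₂ x) * h₂ x * sphDet n h₂ x / radTerm n h₂ x ^ n = f x)
    (x₀ : Euc n) (hx₀ : x₀ ∈ USphere n)
    (hmax : ∀ x ∈ USphere n, h₁ x / h₂ x ≤ h₁ x₀ / h₂ x₀) :
    φ (1 / h₂ x₀) ≤ φ (1 / h₁ x₀) := by
  have hx0 : x₀ ≠ 0 := ne_zero_of_mem_unit_sphere (⟨x₀, hx₀⟩ : USphere n)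
  have hx1 : ‖x₀‖ = 1 := by simpa using hx₀
  have hp1 := hh₁.pos x₀ hx₀
  have hp2 := hh₂.pos x₀ hx₀
  have hmin := isLocalMin_of_ratio_max hh₁ hh₂ hx₀ hmax
  set c := h₁ x₀ / h₂ x₀ with hc
  have hc0 : 0 < c := div_pos hp1 hp2
  have hval : h₁ x₀ = c * h₂ x₀ := (div_mul_cancel₀ _ hp2.ne').symm
  have hC1 := hh₁.contDiffAt hx0
  have hC2 := hh₂.contDiffAt hx0
  have hfd : fderiv ℝ (fun y => c * h₂ y - h₁ y) =ᶠ[𝓝 x₀]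
      fun y => c • fderiv ℝ h₂ y - fderiv ℝ h₁ y := by
    filter_upwards [isOpen_compl_singleton.mem_nhds hx0] with y hy
    exact ((((hh₂.contDiffAt hy).differentiableAt two_ne_zero).hasFDerivAt.const_mul c).sub
      ((hh₁.contDiffAt hy).differentiableAt two_ne_zero).hasFDerivAt).fderiv
  have hgrad : gradient h₁ x₀ = c • gradient h₂ x₀ := by
    have h := hfd.eq_of_nhds
    rw [hmin.fderiv_eq_zero] at h
    refine ext_inner_right ℝ fun w => ?_
    have hw := congrArg (fun T : Euc n →L[ℝ] ℝ => T w) h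
    simp only [sub_apply, smul_apply, zero_apply, smul_eq_mul] at hw
    rw [real_inner_smul_left, gradient, gradient, InnerProductSpace.toDual_symm_apply,
      InnerProductSpace.toDual_symm_apply]
    linarith
  have hrad := radTerm_of_gradient_eq hc0.le hval hgrad
  have hhess : ∀ v, ⟪hessOp n h₁ x₀ v, v⟫ ≤ c * ⟪hessOp n h₂ x₀ v, v⟫ := fun v => by
    have h := hmin.fderiv_fderiv_nonneg ((contDiffAt_const.mul hC2).sub hC1) v
    have hd : ∀ F : Euc n → ℝ, ContDiffAt ℝ 2 F x₀ → HasFDerivAt (fderiv ℝ F)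
        (fderiv ℝ (fderiv ℝ F) x₀) x₀ := fun F hF =>
      ((hF.fderiv_right (m := 1) (by norm_num)).differentiableAt one_ne_zero).hasFDerivAt
    have h2 : fderiv ℝ (fun y => c • fderiv ℝ h₂ y - fderiv ℝ h₁ y) x₀ =
        c • fderiv ℝ (fderiv ℝ h₂) x₀ - fderiv ℝ (fderiv ℝ h₁) x₀ :=
      (((hd h₂ hC2).const_smul c).sub (hd h₁ hC1)).fderiv
    rw [hfd.fderiv_eq, h2] at h
    rw [inner_hessOp hC1, inner_hessOp hC2]
    simpa using h
  obtain ⟨hdpos, hdle⟩ := det_le_det_of_isSymmetric (A := hessPlus n h₁ x₀ c)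
    (B := c • hessPlus n h₂ x₀ 1) (hessPlus_isSymmetric hC1 c)
    (fun v w => by
      simp only [LinearMap.smul_apply, real_inner_smul_left, real_inner_smul_right]
      rw [hessPlus_isSymmetric hC2 1 v w])
    (fun v hv => hh₁.hessPlus_pos hx1 hc0 hv)
    (fun v => by
      rw [LinearMap.smul_apply, real_inner_smul_left, inner_hessPlus, inner_hessPlus]
      linarith [hhess v])
  rw [hh₁.det_hessPlus hx1] at hdpos hdle
  rw [LinearMap.det_smul, ← sphDet_eq, finrank_euclideanSpace_fin] at hdle
  have hR : 0 < radTerm n h₂ x₀ := Real.sqrt_pos.2 (by positivity)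
  have heq := (heq₁ x₀ hx₀).trans (heq₂ x₀ hx₀).symm
  rw [hrad, mul_pow, div_eq_div_iff (by positivity) (by positivity)] at heq
  have hkey : φ (1 / h₁ x₀) * (c * sphDet n h₁ x₀) =
      φ (1 / h₂ x₀) * (c ^ n * sphDet n h₂ x₀) := by
    have hne : h₂ x₀ * radTerm n h₂ x₀ ^ n ≠ 0 := by positivity
    refine mul_right_cancel₀ hne ?_
    have e : φ (1 / h₁ x₀) * h₁ x₀ = φ (1 / h₁ x₀) * (c * h₂ x₀) := by rw [← hval]
    rw [e] at heq
    linear_combination heq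
  have hφ2 : 0 < φ (1 / h₂ x₀) := hφ_pos _ (one_div_pos.2 hp2)
  refine le_of_mul_le_mul_right ?_ hdpos
  rw [hkey]
  exact mul_le_mul_of_nonneg_left hdle hφ2.le
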